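/- arXiv:2403.08418 — 3 statements merged into one kernel-verified Lean document; each statement's English description precedes it below -/
import Mathlib

section
/- Let V be a partial isometry on a complex Hilbert space H and let n ≥ 1. Then V^k is a partial isometry for every k ∈ {1,…,n} if and only if V maps (ker V^k)^⊥ into (ker V^{k-1})^⊥ for every k ∈ {1,…,n}. -/
open ContinuousLinearMap

/-- A bounded operator `V` on a Hilbert space is a partial isometry if it is isometric
on the orthogonal complement of its kernel. -/
def IsPartialIsometry {H : Type*} [NormedAddCommGroup H] [InnerProductSpace ℂ H]
    [CompleteSpace H] (V : H →L[ℂ] H) : Prop :=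
  ∀ x ∈ (LinearMap.ker V.toLinearMap)ᗮ, ‖V x‖ = ‖x‖

/-!
The vectors on which a partial isometry `W` preserves the norm are exactly those of `(ker W)ᗮ`.
If `V` is also a partial isometry, then `‖V x‖ = ‖x‖` for `x ∈ (ker (W * V))ᗮ ⊆ (ker V)ᗮ`, so
`‖W (V x)‖ = ‖x‖` holds for such `x` if and only if `V x ∈ (ker W)ᗮ`. The theorem follows by
induction, with `W` the powers of `V`.
-/

namespace IsPartialIsometry

variable {H : Type*} [NormedAddCommGroup H] [InnerProductSpace ℂ H] [CompleteSpace H]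
  {V W : H →L[ℂ] H}

theorem one : IsPartialIsometry (1 : H →L[ℂ] H) := fun _ _ => rfl

theorem norm_apply_eq_norm_starProjection (hV : IsPartialIsometry V) (x : H) :
    ‖V x‖ = ‖(LinearMap.ker V.toLinearMap)ᗮ.starProjection x‖ := by
  set K := LinearMap.ker V.toLinearMap
  have hVK : V (K.starProjection x) = 0 := K.starProjection_apply_mem x
  calc ‖V x‖ = ‖V (K.starProjection x + Kᗮ.starProjection x)‖ := by
        rw [K.starProjection_add_starProjection_orthogonal]
    _ = ‖V (Kᗮ.starProjection x)‖ := by rw [map_add, hVK, zero_add]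
    _ = ‖Kᗮ.starProjection x‖ := hV _ (Kᗮ.starProjection_apply_mem x)

theorem norm_apply_eq_norm_iff (hV : IsPartialIsometry V) {x : H} :
    ‖V x‖ = ‖x‖ ↔ x ∈ (LinearMap.ker V.toLinearMap)ᗮ := by
  rw [hV.norm_apply_eq_norm_starProjection, Submodule.mem_iff_norm_starProjection, eq_comm]

theorem mul_iff (hW : IsPartialIsometry W) (hV : IsPartialIsometry V) :
    IsPartialIsometry (W * V) ↔
      ∀ x ∈ (LinearMap.ker (W * V).toLinearMap)ᗮ, V x ∈ (LinearMap.ker W.toLinearMap)ᗮ := by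
  refine forall₂_congr fun x hx => ?_
  have hVx : ‖V x‖ = ‖x‖ :=
    hV x (Submodule.orthogonal_le (LinearMap.ker_le_ker_comp V.toLinearMap W.toLinearMap) hx)
  rw [← hW.norm_apply_eq_norm_iff, hVx, mul_apply_eq_comp]

theorem forall_lt_pow_succ_iff (hV : IsPartialIsometry V) (n : ℕ) :
    (∀ k < n, IsPartialIsometry (V ^ (k + 1))) ↔
      ∀ k < n, ∀ x ∈ (LinearMap.ker (V ^ (k + 1)).toLinearMap)ᗮ,
        V x ∈ (LinearMap.ker (V ^ k).toLinearMap)ᗮ := by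
  induction n with
  | zero => simp
  | succ n ih =>
    rw [Nat.forall_lt_succ_right, Nat.forall_lt_succ_right, ← ih]
    refine and_congr_right fun hpow => ?_
    have hVn : IsPartialIsometry (V ^ n) := by
      cases n with
      | zero => exact one
      | succ n => exact hpow n n.lt_succ_self
    rw [pow_succ]
    exact hVn.mul_iff hV

end IsPartialIsometry

theorem stmt_1 {H : Type*} [NormedAddCommGroup H] [InnerProductSpace ℂ H] [CompleteSpace H]
    (V : H →L[ℂ] H) (hV : IsPartialIsometry V) (n : ℕ) (hn : 1 ≤ n) :
    (∀ k ∈ Finset.Icc 1 n, IsPartialIsometry (V ^ k)) ↔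
      (∀ k ∈ Finset.Icc 1 n, ∀ x ∈ (LinearMap.ker (V ^ k).toLinearMap)ᗮ,
        V x ∈ (LinearMap.ker (V ^ (k - 1)).toLinearMap)ᗮ) := by
  have forall_Icc_iff (P : ℕ → Prop) : (∀ k ∈ Finset.Icc 1 n, P k) ↔ ∀ k < n, P (k + 1) := by
    refine ⟨fun h k hk => h (k + 1) (Finset.mem_Icc.2 ⟨k.succ_pos, hk⟩), fun h k hk => ?_⟩
    obtain ⟨one_le, le_n⟩ := Finset.mem_Icc.1 hk
    simpa only [Nat.sub_add_cancel one_le] using h (k - 1) (by lia)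
  rw [forall_Icc_iff, forall_Icc_iff]
  exact hV.forall_lt_pow_succ_iff n
end

section
/- Let V be a partial isometry on a complex Hilbert space H such that V^n is a partial isometry for some n ≥ 2. If V maps (ker V^{n+1})^⊥ into (ker V^n)^⊥, then V^{n+1} is a partial isometry. -/
open ContinuousLinearMap

theorem IsPartialIsometry.mul_of_mapsTo {H : Type*} [NormedAddCommGroup H] [InnerProductSpace ℂ H]
    [CompleteSpace H] {A B : H →L[ℂ] H} (hA : IsPartialIsometry A) (hB : IsPartialIsometry B)
    (hAB : Set.MapsTo B (LinearMap.ker (A * B).toLinearMap)ᗮ (LinearMap.ker A.toLinearMap)ᗮ) :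
    IsPartialIsometry (A * B) := by
  intro x hx
  have hx_ker_B : x ∈ (LinearMap.ker B.toLinearMap)ᗮ :=
    Submodule.orthogonal_le (LinearMap.ker_le_ker_comp B.toLinearMap A.toLinearMap) hx
  calc
    ‖(A * B) x‖ = ‖A (B x)‖ := rfl
    _ = ‖B x‖ := hA (B x) (hAB hx)
    _ = ‖x‖ := hB x hx_ker_B

theorem stmt_11 {H : Type*} [NormedAddCommGroup H] [InnerProductSpace ℂ H] [CompleteSpace H]
    (V : H →L[ℂ] H) (hV : IsPartialIsometry V) (n : ℕ) (hn : 2 ≤ n)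
    (hVn : IsPartialIsometry (V ^ n))
    (h : ∀ x ∈ (LinearMap.ker (V ^ (n + 1)).toLinearMap)ᗮ, V x ∈ (LinearMap.ker (V ^ n).toLinearMap)ᗮ) :
    IsPartialIsometry (V ^ (n + 1)) := by
  rw [pow_succ] at h ⊢
  exact hVn.mul_of_mapsTo hV h
end

section
/- Let V be a contraction on a complex Hilbert space H and suppose V^k is a partial isometry for some k ≥ 2. If (1) ‖Vh‖ = ‖h‖ for every h ∈ ker(V^k) ∩ (ker V)^⊥, and (2) V maps (ker V^k)^⊥ into (ker V^{k-1})^⊥, then V is a partial isometry. -/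
open ContinuousLinearMap

/-!
Write `V ^ k = S ∘ T` with `T = V` and `S = V ^ (k - 1)`. Since `ker T ≤ ker (S ∘ T)`, the space
`(ker T)ᗮ` is the orthogonal sum of `(ker (S ∘ T))ᗮ` and `ker (S ∘ T) ⊓ (ker T)ᗮ`. On the first
summand `T` is isometric because `‖x‖ = ‖S (T x)‖ ≤ ‖T x‖ ≤ ‖x‖`, on the second by hypothesis.
The images of the two summands lie in `(ker S)ᗮ` and `ker S`, so they are again orthogonal and
Pythagoras applies on both sides.
-/

section NormedSpace

variable {𝕜 E F G : Type*} [NontriviallyNormedField 𝕜]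
  [SeminormedAddCommGroup E] [NormedSpace 𝕜 E] [SeminormedAddCommGroup F] [NormedSpace 𝕜 F]
  [SeminormedAddCommGroup G] [NormedSpace 𝕜 G]

theorem norm_map_eq_of_norm_map_map_eq {T : E →L[𝕜] F} {S : F →L[𝕜] G}
    (hT : ‖T‖ ≤ 1) (hS : ‖S‖ ≤ 1) {x : E} (hx : ‖S (T x)‖ = ‖x‖) : ‖T x‖ = ‖x‖ := by
  apply le_antisymm
  · simpa only [one_mul] using T.le_of_opNorm_le hT x
  · simpa only [one_mul, hx] using S.le_of_opNorm_le hS (T x)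

end NormedSpace

theorem norm_map_add_eq_of_inner_eq_zero {𝕜 E F : Type*} [RCLike 𝕜]
    [SeminormedAddCommGroup E] [InnerProductSpace 𝕜 E]
    [SeminormedAddCommGroup F] [InnerProductSpace 𝕜 F] {T : E →ₗ[𝕜] F} {x y : E}
    (hxy : inner 𝕜 x y = 0) (hTxy : inner 𝕜 (T x) (T y) = 0)
    (hx : ‖T x‖ = ‖x‖) (hy : ‖T y‖ = ‖y‖) : ‖T (x + y)‖ = ‖x + y‖ := by
  rw [← sq_eq_sq₀ (norm_nonneg _) (norm_nonneg _), map_add, norm_add_sq (𝕜 := 𝕜),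
    norm_add_sq (𝕜 := 𝕜), hxy, hTxy, hx, hy]

section InnerProductSpace

variable {𝕜 E F G : Type*} [RCLike 𝕜] [NormedAddCommGroup E] [InnerProductSpace 𝕜 E]
  [NormedAddCommGroup F] [InnerProductSpace 𝕜 F] [SeminormedAddCommGroup G] [NormedSpace 𝕜 G]

theorem orthogonal_sup_inf_orthogonal_of_le {K L : Submodule 𝕜 E} [K.HasOrthogonalProjection]
    (hLK : L ≤ K) : Kᗮ ⊔ K ⊓ Lᗮ = Lᗮ := by
  simpa only [K.orthogonal_orthogonal] using
    Submodule.sup_orthogonal_inf_of_hasOrthogonalProjection (Submodule.orthogonal_le hLK)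

theorem norm_map_eq_of_mem_orthogonal_ker_of_comp {T : E →L[𝕜] F} {S : F →L[𝕜] G}
    [(S ∘L T).ker.HasOrthogonalProjection]
    (hT : ‖T‖ ≤ 1) (hS : ‖S‖ ≤ 1)
    (hST : ∀ x ∈ (S ∘L T).kerᗮ, ‖S (T x)‖ = ‖x‖)
    (hker : ∀ x ∈ (S ∘L T).ker ⊓ T.kerᗮ, ‖T x‖ = ‖x‖)
    (hmaps : ∀ x ∈ (S ∘L T).kerᗮ, T x ∈ S.kerᗮ)
    {x : E} (hx : x ∈ T.kerᗮ) : ‖T x‖ = ‖x‖ := by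
  have hle : T.ker ≤ (S ∘L T).ker := LinearMap.ker_le_ker_comp T.toLinearMap S.toLinearMap
  rw [← orthogonal_sup_inf_orthogonal_of_le hle] at hx
  obtain ⟨y, hy, z, hz, rfl⟩ := Submodule.mem_sup.mp hx
  have hTz : T z ∈ S.ker := hz.1
  have hyz : inner 𝕜 y z = 0 := Submodule.inner_left_of_mem_orthogonal hz.1 hy
  have hTyz : inner 𝕜 (T y) (T z) = 0 := Submodule.inner_left_of_mem_orthogonal hTz (hmaps y hy)
  have hy_norm : ‖T y‖ = ‖y‖ := norm_map_eq_of_norm_map_map_eq hT hS (hST y hy)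
  exact norm_map_add_eq_of_inner_eq_zero (T := T.toLinearMap) hyz hTyz hy_norm (hker z hz)

end InnerProductSpace

theorem stmt_14 {H : Type*} [NormedAddCommGroup H] [InnerProductSpace ℂ H] [CompleteSpace H]
    (V : H →L[ℂ] H) (hcontr : ‖V‖ ≤ 1)
    (k : ℕ) (hk : 2 ≤ k) (hpi : IsPartialIsometry (V ^ k))
    (h1 : ∀ h ∈ LinearMap.ker (V ^ k).toLinearMap ⊓ (LinearMap.ker V.toLinearMap)ᗮ, ‖V h‖ = ‖h‖)
    (h2 : ∀ x ∈ (LinearMap.ker (V ^ k).toLinearMap)ᗮ, V x ∈ (LinearMap.ker (V ^ (k - 1)).toLinearMap)ᗮ) :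
    IsPartialIsometry V := by
  have hpow_norm : ‖V ^ (k - 1)‖ ≤ 1 :=
    (norm_pow_le' V (by lia)).trans (pow_le_one₀ (norm_nonneg V) hcontr)
  have hpow : V ^ k = (V ^ (k - 1)) ∘L V := (pow_sub_one_mul (by lia) V).symm
  rw [hpow] at hpi h1 h2
  have : CompleteSpace ((V ^ (k - 1)) ∘L V).ker :=
    ((V ^ (k - 1)) ∘L V).isClosed_ker.completeSpace_coe
  intro x hx
  exact norm_map_eq_of_mem_orthogonal_ker_of_comp hcontr hpow_norm hpi h1 h2 hx
end
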